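/- arXiv:1910.02794 — 4 statements merged into one kernel-verified Lean document; each statement's English description precedes it below -/
import Mathlib

section
/- Let G be a finite simple graph whose vertex set carries a linear order, let r ∈ ℕ, let M be a distance-r dominating set of G, and let c be the covering map with Voronoi cells H_m. Then for every m ∈ M and every v ∈ H_m there is a path from v to m of length dist(v,m) ≤ r all of whose vertices lie in H_m; in particular, the subgraph of G induced by H_m is connected and every vertex of H_m is within distance r of m inside that induced subgraph. -/
/-!
Let `x` lie on a geodesic from `v` to `m = c v`, and put `m' = c x`. Then
`dist v x + dist x m = dist v m ≤ dist v m' ≤ dist v x + dist x m'`, so `dist x m ≤ dist x m'`,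
and the converse inequality holds by the choice of `m'`. Hence the chain collapses and `m`, `m'`
tie both at `v` and at `x`; the tie-breaking rule gives `m ≤ m'` at `v` and `m' ≤ m` at `x`, so
`c x = m`: the geodesic stays in the Voronoi cell of `m`.
-/

open SimpleGraph

/-- `M` is a distance-`r` dominating set of `G`: every vertex is within graph
distance `r` of some vertex of `M` (expressed via a walk of length `≤ r`). -/
def IsDistDomSet {V : Type*} (G : SimpleGraph V) (r : ℕ) (M : Set V) : Prop :=
  ∀ v : V, ∃ m ∈ M, ∃ p : G.Walk v m, p.length ≤ r

/-- `c` is the covering map of `M`: it sends each vertex `v` to the vertex `m ∈ M`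
minimizing the pair `(dist v m, m)` lexicographically (distance to unreachable
vertices being infinite, so only reachable members of `M` compete). -/
def IsVoronoiCovering {V : Type*} [LinearOrder V] (G : SimpleGraph V) (M : Set V)
    (c : V → V) : Prop :=
  ∀ v : V, c v ∈ M ∧ G.Reachable v (c v) ∧
    ∀ m ∈ M, G.Reachable v m →
      G.dist v (c v) < G.dist v m ∨ (G.dist v (c v) = G.dist v m ∧ c v ≤ m)

section Walk

variable {V : Type*} {G : SimpleGraph V} {u v x : V}

theorem walk_length_induce {s : Set V} (p : G.Walk u v) (hp : ∀ y ∈ p.support, y ∈ s) :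
    (p.induce s hp).length = p.length := by
  rw [← Walk.length_map (Embedding.induce s).toHom]
  exact congrArg Walk.length (p.map_induce hp)

theorem dist_add_dist_of_mem_support {p : G.Walk u v} (hp : p.length = G.dist u v)
    (hx : x ∈ p.support) : G.dist u x + G.dist x v = G.dist u v := by
  classical
  rw [← length_eq_dist_of_subwalk hp (p.isSubwalk_takeUntil hx),
    ← length_eq_dist_of_subwalk hp (p.isSubwalk_dropUntil hx),
    ← Walk.length_append, p.take_spec hx, hp]

end Walk

/-- The Voronoi cell `H_m` of the covering map `c`: the vertices that `c` assigns to `m`. It is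
reducible, so that it can be used interchangeably with the set `{v | c v = m}`. -/
abbrev voronoiCell {V : Type*} (c : V → V) (m : V) : Set V :=
  {v | c v = m}

namespace IsVoronoiCovering

variable {V : Type*} [LinearOrder V] {G : SimpleGraph V} {M : Set V} {c : V → V} {m v x : V}

theorem reachable (hc : IsVoronoiCovering G M c) (v : V) : G.Reachable v (c v) :=
  (hc v).2.1

theorem dist_le (hc : IsVoronoiCovering G M c) (hm : m ∈ M) (hvm : G.Reachable v m) :
    G.dist v (c v) ≤ G.dist v m :=
  ((hc v).2.2 m hm hvm).elim le_of_lt fun h ↦ h.1.le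

theorem le_of_dist_eq (hc : IsVoronoiCovering G M c) (hm : m ∈ M) (hvm : G.Reachable v m)
    (h : G.dist v (c v) = G.dist v m) : c v ≤ m :=
  ((hc v).2.2 m hm hvm).elim (fun hlt ↦ absurd h hlt.ne) And.right

theorem dist_le_of_isDistDomSet {r : ℕ} (hc : IsVoronoiCovering G M c)
    (hdom : IsDistDomSet G r M) (v : V) : G.dist v (c v) ≤ r := by
  obtain ⟨m, hm, p, hp⟩ := hdom v
  exact (hc.dist_le hm p.reachable).trans ((SimpleGraph.dist_le p).trans hp)

theorem apply_eq_self (hc : IsVoronoiCovering G M c) (hm : m ∈ M) : c m = m := by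
  have hdist : G.dist m (c m) = 0 := by
    simpa only [dist_self, Nat.le_zero] using hc.dist_le hm (Reachable.refl m)
  exact ((hc.reachable m).dist_eq_zero_iff.mp hdist).symm

theorem apply_eq_of_dist_add_dist (hc : IsVoronoiCovering G M c) (hvx : G.Reachable v x)
    (h : G.dist v x + G.dist x (c v) = G.dist v (c v)) : c x = c v := by
  have hx_cv : G.Reachable x (c v) := hvx.symm.trans (hc.reachable v)
  have hv_cx : G.Reachable v (c x) := hvx.trans (hc.reachable x)
  have hx_le : G.dist x (c x) ≤ G.dist x (c v) := hc.dist_le (hc v).1 hx_cv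
  have hv_le : G.dist v (c v) ≤ G.dist v (c x) := hc.dist_le (hc x).1 hv_cx
  have htri : G.dist v (c x) ≤ G.dist v x + G.dist x (c x) := hvx.dist_triangle_left (c x)
  apply le_antisymm
  · exact hc.le_of_dist_eq (hc v).1 hx_cv (by omega)
  · exact hc.le_of_dist_eq (hc x).1 hv_cx (by omega)

theorem apply_eq_of_mem_support (hc : IsVoronoiCovering G M c) {p : G.Walk v (c v)}
    (hp : p.length = G.dist v (c v)) (hx : x ∈ p.support) : c x = c v := by
  classical
  exact hc.apply_eq_of_dist_add_dist (p.takeUntil x hx).reachable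
    (dist_add_dist_of_mem_support hp hx)

theorem exists_isPath_support_subset_voronoiCell (hc : IsVoronoiCovering G M c) (v : V) :
    ∃ p : G.Walk v (c v), p.IsPath ∧ p.length = G.dist v (c v) ∧
      ∀ x ∈ p.support, x ∈ voronoiCell c (c v) := by
  obtain ⟨p, hpath, hlen⟩ := (hc.reachable v).exists_path_of_dist
  exact ⟨p, hpath, hlen, fun _ ↦ hc.apply_eq_of_mem_support hlen⟩

theorem exists_walk_induce_voronoiCell (hc : IsVoronoiCovering G M c) (hm : m ∈ M)
    (hv : v ∈ voronoiCell c m) :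
    ∃ q : (G.induce (voronoiCell c m)).Walk ⟨v, hv⟩ ⟨m, hc.apply_eq_self hm⟩,
      q.length = G.dist v m := by
  obtain rfl : c v = m := hv
  obtain ⟨p, -, hlen, hcell⟩ := hc.exists_isPath_support_subset_voronoiCell v
  exact ⟨p.induce _ hcell, (walk_length_induce p hcell).trans hlen⟩

theorem connected_induce_voronoiCell (hc : IsVoronoiCovering G M c) (hm : m ∈ M) :
    (G.induce (voronoiCell c m)).Connected := by
  refine (connected_iff_exists_forall_reachable _).mpr ⟨⟨m, hc.apply_eq_self hm⟩, ?_⟩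
  rintro ⟨v, hv⟩
  obtain ⟨q, -⟩ := hc.exists_walk_induce_voronoiCell hm hv
  exact q.reachable.symm

end IsVoronoiCovering

theorem stmt0_general {V : Type*} [LinearOrder V] (G : SimpleGraph V) (r : ℕ)
    (M : Set V) (hdom : IsDistDomSet G r M) (c : V → V) (hc : IsVoronoiCovering G M c)
    (m : V) (hm : m ∈ M) :
    (∀ v : V, c v = m → ∃ p : G.Walk v m, p.IsPath ∧ p.length = G.dist v m ∧
      G.dist v m ≤ r ∧ ∀ x ∈ p.support, c x = m) ∧
    (G.induce {v | c v = m}).Connected ∧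
    ∃ hmm : c m = m, ∀ (v : V) (hv : c v = m),
      ∃ q : (G.induce {v | c v = m}).Walk ⟨v, hv⟩ ⟨m, hmm⟩, q.length ≤ r := by
  refine ⟨?_, hc.connected_induce_voronoiCell hm, hc.apply_eq_self hm, ?_⟩
  · rintro v rfl
    obtain ⟨p, hpath, hlen, hcell⟩ := hc.exists_isPath_support_subset_voronoiCell v
    exact ⟨p, hpath, hlen, hc.dist_le_of_isDistDomSet hdom v, hcell⟩
  · intro v hv
    obtain ⟨q, hlen⟩ := hc.exists_walk_induce_voronoiCell hm hv
    have hdist : G.dist v m ≤ r := hv ▸ hc.dist_le_of_isDistDomSet hdom v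
    exact ⟨q, hlen.trans_le hdist⟩

/-- For every `m ∈ M` and every `v` in the Voronoi cell `H_m = {v | c v = m}` there is
a path from `v` to `m` of length `dist v m ≤ r` all of whose vertices lie in `H_m`;
in particular the subgraph induced by `H_m` is connected and every vertex of `H_m`
is within distance `r` of `m` inside that induced subgraph. -/
theorem stmt0 {V : Type*} [Fintype V] [LinearOrder V] (G : SimpleGraph V) (r : ℕ)
    (M : Set V) (hdom : IsDistDomSet G r M) (c : V → V) (hc : IsVoronoiCovering G M c)
    (m : V) (hm : m ∈ M) :
    (∀ v : V, c v = m → ∃ p : G.Walk v m, p.IsPath ∧ p.length = G.dist v m ∧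
      G.dist v m ≤ r ∧ ∀ x ∈ p.support, c x = m) ∧
    (G.induce {v | c v = m}).Connected ∧
    ∃ hmm : c m = m, ∀ (v : V) (hv : c v = m),
      ∃ q : (G.induce {v | c v = m}).Walk ⟨v, hv⟩ ⟨m, hmm⟩, q.length ≤ r :=
  stmt0_general G r M hdom c hc m hm
end

section
/- Let G be a finite simple graph whose vertex set carries a linear order, let r ∈ ℕ, suppose G has girth at least 4r+3, let M be a distance-r dominating set of G, and let H_m be the Voronoi cell of m ∈ M under the covering map. Then the subgraph of G induced by H_m is acyclic (hence a tree). -/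
open SimpleGraph

/-!
A vertex of a cycle at maximal distance from `m` has two neighbors on the cycle that are no farther
from `m` than itself. On the other hand, if `x` is a neighbor of `v` no farther from `m` than `v`,
then the edge `vx` followed by a geodesic from `x` to `m` is a path, and together with a geodesic
from `v` to `m` it has total length at most `2 * dist v m + 1`. When the girth exceeds this number
the two paths coincide, so `x` is the second vertex of the geodesic and hence unique. Small balls
are therefore acyclic, and a Voronoi cell lies in the ball of radius `r` around its center.
-/

section Graph

variable {V : Type*} {G : SimpleGraph V} {v m x : V}

theorem isAcyclic_of_forall_adj_le_unique {α : Type*} [LinearOrder α] (f : V → α)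
    (h : ∀ ⦃v x y⦄, G.Adj v x → G.Adj v y → f x ≤ f v → f y ≤ f v → x = y) :
    G.IsAcyclic := by
  classical
  intro u w hw
  obtain ⟨v, hv, hmax⟩ :=
    w.support.toFinset.exists_max_image f ⟨u, List.mem_toFinset.2 w.start_mem_support⟩
  rw [List.mem_toFinset] at hv
  have hC : (w.rotate v hv).IsCycle := hw.rotate hv
  have hle : ∀ x ∈ (w.rotate v hv).support, f x ≤ f v := fun x hx ↦
    hmax x (List.mem_toFinset.2 ((w.mem_support_rotate_iff v hv).1 hx))
  exact hC.snd_ne_penultimate <|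
    h (Walk.adj_snd hC.not_nil) (Walk.adj_penultimate hC.not_nil).symm
      (hle _ (Walk.getVert_mem_support _ _)) (hle _ (Walk.getVert_mem_support _ _))

theorem eq_of_isPath_of_length_add_lt_egirth {p q : G.Walk v m} (hp : p.IsPath) (hq : q.IsPath)
    (h : ((p.length + q.length : ℕ) : ℕ∞) < G.egirth) : p = q := by
  by_contra hne
  obtain ⟨_, _, _, C, hC, hlen⟩ := hp.exists_isCycle_length_le_add_of_ne hq hne
  exact h.not_ge ((egirth_le_length hC).trans (Nat.cast_le.2 hlen))

theorem isPath_cons_of_length_le_dist {q : G.Walk x m} (hq : q.IsPath)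
    (hlen : q.length ≤ G.dist v m) (hvx : G.Adj v x) : (Walk.cons hvx q).IsPath := by
  classical
  refine hq.cons fun hv ↦ ?_
  have hlt : (q.dropUntil v hv).length < q.length := Walk.length_dropUntil_lt_length hv hvx.ne
  exact (dist_le (q.dropUntil v hv)).not_gt (hlt.trans_le hlen)

theorem eq_snd_of_adj_of_dist_le {p : G.Walk v m} (hp : p.length = G.dist v m)
    (hgirth : ((2 * G.dist v m + 1 : ℕ) : ℕ∞) < G.egirth)
    (hvx : G.Adj v x) (hx : G.dist x m ≤ G.dist v m) : x = p.snd := by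
  obtain ⟨q, hq, hqlen⟩ := (hvx.symm.reachable.trans p.reachable).exists_path_of_dist
  have hcons : (Walk.cons hvx q).IsPath := isPath_cons_of_length_le_dist hq (hqlen.trans_le hx) hvx
  have hsum : (Walk.cons hvx q).length + p.length ≤ 2 * G.dist v m + 1 := by
    rw [Walk.length_cons]
    omega
  have heq : Walk.cons hvx q = p :=
    eq_of_isPath_of_length_add_lt_egirth hcons (p.isPath_of_length_eq_dist hp)
      ((Nat.cast_le.2 hsum).trans_lt hgirth)
  rw [← heq, Walk.snd_cons]

-- The bound is sharp: in a cycle of length `2 * n - 1` the open ball of radius `n` is everything.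
theorem isAcyclic_induce_ball {n : ℕ∞} (hgirth : 2 * n ≤ G.egirth) (m : V) :
    (G.induce (G.ball m n)).IsAcyclic := by
  refine isAcyclic_of_forall_adj_le_unique (fun v ↦ G.dist v m) ?_
  rintro ⟨v, hv : G.edist v m < n⟩ x y hvx hvy hx hy
  have hreach : G.Reachable v m := reachable_of_edist_ne_top hv.ne_top
  obtain ⟨p, hp⟩ := hreach.exists_walk_length_eq_dist
  have hsmall : ((2 * G.dist v m + 1 : ℕ) : ℕ∞) < G.egirth := by
    have hle : ((G.dist v m + 1 : ℕ) : ℕ∞) ≤ n := by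
      rw [Nat.cast_succ, hreach.coe_dist_eq_edist]
      exact Order.add_one_le_of_lt hv
    calc ((2 * G.dist v m + 1 : ℕ) : ℕ∞) < (2 * (G.dist v m + 1) : ℕ) := Nat.cast_lt.2 (by omega)
      _ = 2 * ((G.dist v m + 1 : ℕ) : ℕ∞) := Nat.cast_mul _ _
      _ ≤ 2 * n := by gcongr
      _ ≤ G.egirth := hgirth
  exact Subtype.ext <| (eq_snd_of_adj_of_dist_le hp hsmall hvx hx).trans
    (eq_snd_of_adj_of_dist_le hp hsmall hvy hy).symm

end Graph

section Voronoi

variable {V : Type*} [LinearOrder V] {G : SimpleGraph V} {M : Set V} {c : V → V}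

theorem IsVoronoiCovering.edist_le (hc : IsVoronoiCovering G M c) (v : V) {m : V} (hm : m ∈ M) :
    G.edist v (c v) ≤ G.edist v m := by
  by_cases hvm : G.Reachable v m
  · obtain ⟨-, hvc, hmin⟩ := hc v
    rw [← hvc.coe_dist_eq_edist, ← hvm.coe_dist_eq_edist, Nat.cast_le]
    exact (hmin m hm hvm).elim le_of_lt fun h ↦ h.1.le
  · exact (edist_eq_top_of_not_reachable hvm).symm ▸ le_top

theorem IsVoronoiCovering.cell_subset_ball (hc : IsVoronoiCovering G M c) {r : ℕ}
    (hdom : IsDistDomSet G r M) (m : V) : {v | c v = m} ⊆ G.ball m (r + 1) := by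
  rintro v rfl
  obtain ⟨m', hm', p, hp⟩ := hdom v
  have hle : G.edist v (c v) ≤ r :=
    (hc.edist_le v hm').trans (p.edist_le.trans (Nat.cast_le.2 hp))
  exact hle.trans_lt (by exact_mod_cast r.lt_succ_self)

end Voronoi

theorem stmt1_general {V : Type*} [LinearOrder V] (G : SimpleGraph V) (r : ℕ)
    (hgirth : ((2 * r + 2 : ℕ) : ℕ∞) ≤ G.egirth)
    (M : Set V) (hdom : IsDistDomSet G r M) (c : V → V) (hc : IsVoronoiCovering G M c) (m : V) :
    (G.induce {v | c v = m}).IsAcyclic := by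
  have hball : (G.induce (G.ball m (r + 1))).IsAcyclic :=
    isAcyclic_induce_ball (by exact_mod_cast hgirth) m
  exact hball.embedding (G.induceHomOfLE (hc.cell_subset_ball hdom m))

/-- If `G` has girth at least `4r+3` and `M` is a distance-`r` dominating set with
covering map `c`, then the subgraph induced by each Voronoi cell
`H_m = {v | c v = m}` is acyclic (hence a tree). -/
theorem stmt1 {V : Type*} [Fintype V] [LinearOrder V] (G : SimpleGraph V) (r : ℕ)
    (hgirth : ((4 * r + 3 : ℕ) : ℕ∞) ≤ G.egirth)
    (M : Set V) (hdom : IsDistDomSet G r M) (c : V → V) (hc : IsVoronoiCovering G M c)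
    (m : V) (hm : m ∈ M) :
    (G.induce {v | c v = m}).IsAcyclic :=
  stmt1_general G r (le_trans (by norm_cast; omega) hgirth) M hdom c hc m
end

section
/- Let G be a finite simple graph, let r ∈ ℕ, and let S and T be disjoint vertex sets each of which induces a connected subgraph of G, such that S contains a vertex whose distance (measured inside the subgraph induced by S) to every vertex of S is at most r, and likewise for T. If there exist two distinct edges of G each having one endpoint in S and the other endpoint in T, then G contains a cycle of length at most 4r+2. -/
open SimpleGraph

/-!
A route from `u` to `s` inside `S`, the edge `st`, and a route from `t` back to `v` inside `T`
form a walk from `u` to `v` that avoids the edge `uv`: the two routes miss `v` and `u`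
respectively, and `st` is a different edge. Shortcutting this walk to a path and closing it up
with `uv` gives a cycle. Routes through the centres have length at most twice the radius.
-/

section Walks

variable {V : Type*} {G : SimpleGraph V} {u v s t : V}

theorem exists_isCycle_length_le_of_notMem_edges (huv : G.Adj u v) (w : G.Walk u v)
    (hw : s(u, v) ∉ w.edges) :
    ∃ (x : V) (c : G.Walk x x), c.IsCycle ∧ c.length ≤ w.length + 1 := by
  classical
  refine ⟨v, .cons huv.symm w.bypass, ?_, ?_⟩
  · rw [Walk.cons_isCycle_iff, Sym2.eq_swap]
    exact ⟨w.bypass_isPath, fun h ↦ hw (w.edges_bypass_subset_edges h)⟩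
  · rw [Walk.length_cons]
    exact Nat.succ_le_succ w.length_bypass_le_length

theorem exists_isCycle_length_le_of_adj_of_adj (huv : G.Adj u v) (hst : G.Adj s t)
    (hne : s(u, v) ≠ s(s, t)) (p : G.Walk u s) (q : G.Walk v t)
    (hp : v ∉ p.support) (hq : u ∉ q.support) :
    ∃ (x : V) (c : G.Walk x x), c.IsCycle ∧ c.length ≤ p.length + q.length + 2 := by
  let w : G.Walk u v := p.append (.cons hst q.reverse)
  have hw : s(u, v) ∉ w.edges := by
    simp only [w, Walk.edges_append, Walk.edges_cons, Walk.edges_reverse, List.mem_append,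
      List.mem_cons, List.mem_reverse, not_or]
    exact ⟨fun h ↦ hp (p.snd_mem_support_of_mem_edges h), hne,
      fun h ↦ hq (q.fst_mem_support_of_mem_edges h)⟩
  have hlen : w.length + 1 = p.length + q.length + 2 := by
    simp only [w, Walk.length_append, Walk.length_cons, Walk.length_reverse]
    ring
  exact hlen ▸ exists_isCycle_length_le_of_notMem_edges huv w hw

theorem support_map_induce_subset {S : Set V} {a b : S} (p : (G.induce S).Walk a b) :
    ∀ x ∈ (p.map (Embedding.induce S).toHom).support, x ∈ S := by
  intro x hx
  rw [Walk.support_map, List.mem_map] at hx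
  obtain ⟨y, -, rfl⟩ := hx
  exact y.2

theorem exists_walk_support_subset_length_le_two_mul {S : Set V} {r : ℕ}
    (hS : ∃ c : S, ∀ x : S, ∃ p : (G.induce S).Walk c x, p.length ≤ r)
    (hu : u ∈ S) (hv : v ∈ S) :
    ∃ p : G.Walk u v, (∀ x ∈ p.support, x ∈ S) ∧ p.length ≤ 2 * r := by
  obtain ⟨c, hc⟩ := hS
  obtain ⟨p, hp⟩ := hc ⟨u, hu⟩
  obtain ⟨q, hq⟩ := hc ⟨v, hv⟩
  refine ⟨(p.reverse.append q).map (Embedding.induce S).toHom, support_map_induce_subset _, ?_⟩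
  calc ((p.reverse.append q).map (Embedding.induce S).toHom).length
      = p.length + q.length := by
        rw [Walk.length_map, Walk.length_append, Walk.length_reverse]
    _ ≤ 2 * r := by omega

end Walks

theorem stmt4_general {V : Type*} (G : SimpleGraph V) (k l : ℕ) (S T : Set V)
    (hS : ∃ s₀ : S, ∀ x : S, ∃ p : (G.induce S).Walk s₀ x, p.length ≤ k)
    (hT : ∃ t₀ : T, ∀ x : T, ∃ p : (G.induce T).Walk t₀ x, p.length ≤ l)
    (u v s t : V) (hu : u ∈ S \ T) (hv : v ∈ T \ S) (hs : s ∈ S) (ht : t ∈ T)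
    (huv : G.Adj u v) (hst : G.Adj s t) (hne : s(u, v) ≠ s(s, t)) :
    ∃ (x : V) (p : G.Walk x x), p.IsCycle ∧ p.length ≤ 2 * k + 2 * l + 2 := by
  obtain ⟨p, hpS, hp⟩ := exists_walk_support_subset_length_le_two_mul hS hu.1 hs
  obtain ⟨q, hqT, hq⟩ := exists_walk_support_subset_length_le_two_mul hT hv.1 ht
  obtain ⟨x, c, hc, hlen⟩ := exists_isCycle_length_le_of_adj_of_adj huv hst hne p q
    (fun h ↦ hv.2 (hpS v h)) (fun h ↦ hu.2 (hqT u h))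
  exact ⟨x, c, hc, by omega⟩

/-- If `S` and `T` are disjoint vertex sets, each inducing a connected subgraph of
radius at most `r` (measured inside the induced subgraph), and there are two
distinct edges of `G` between `S` and `T`, then `G` contains a cycle of length at
most `4r+2`. -/
theorem stmt4 {V : Type*} [Fintype V] (G : SimpleGraph V) (r : ℕ) (S T : Set V)
    (hdisj : Disjoint S T)
    (hSconn : (G.induce S).Connected) (hTconn : (G.induce T).Connected)
    (hS : ∃ s₀ : S, ∀ x : S, ∃ p : (G.induce S).Walk s₀ x, p.length ≤ r)
    (hT : ∃ t₀ : T, ∀ x : T, ∃ p : (G.induce T).Walk t₀ x, p.length ≤ r)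
    (u v s t : V) (hu : u ∈ S) (hv : v ∈ T) (hs : s ∈ S) (ht : t ∈ T)
    (huv : G.Adj u v) (hst : G.Adj s t)
    (hne : (s(u, v) : Sym2 V) ≠ s(s, t)) :
    ∃ (x : V) (p : G.Walk x x), p.IsCycle ∧ p.length ≤ 4 * r + 2 := by
  obtain ⟨x, p, hp, hlen⟩ := stmt4_general G r r S T hS hT u v s t
    ⟨hu, hdisj.notMem_of_mem_left hu⟩ ⟨hv, hdisj.notMem_of_mem_right hv⟩ hs ht huv hst hne
  exact ⟨x, p, hp, by omega⟩
end

section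
/- Let G be a finite simple graph, let r ≥ 1, let v and w be adjacent vertices, and let S be a set of vertices with v ∈ S and w ∉ S such that (i) every vertex of S has graph distance at most r−1 from v, and (ii) every walk in G from v to a vertex outside S passes through w. Then N^r[v] ⊆ N^r[w]; moreover, if in addition some vertex t of G has dist(t,v) = r+1, then |N^r(v)| < |N^r(w)|. -/
/-!
Every vertex at distance at most `r + 1` from `v` is at distance at most `r` from `w`: a vertex
of `S` is so because it is within `r - 1` of `v`, and for any other vertex a walk from `v` meets
`w` after at least one step, so that its part from `w` on is shorter. Hence
`N^r[v] ⊆ N^(r+1)[v] ⊆ N^r[w]`, and a vertex at distance exactly `r + 1` from `v` makes the first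
inclusion strict.
-/

open SimpleGraph

/-- The closed distance-`r` ball around `v`: all vertices joined to `v` by a walk
of length at most `r`. -/
def closedBall {V : Type*} (G : SimpleGraph V) (v : V) (r : ℕ) : Set V :=
  {u | ∃ p : G.Walk v u, p.length ≤ r}

section closedBall

variable {V : Type*} {G : SimpleGraph V} {u v w : V} {r s : ℕ}

theorem mem_closedBall_self : v ∈ closedBall G v r :=
  ⟨Walk.nil, r.zero_le⟩

theorem mem_closedBall_symm (h : u ∈ closedBall G v r) : v ∈ closedBall G u r :=
  let ⟨p, hp⟩ := h
  ⟨p.reverse, p.length_reverse.trans_le hp⟩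

theorem closedBall_subset_closedBall_of_le (h : s ≤ r) : closedBall G v s ⊆ closedBall G v r :=
  fun _ ⟨p, hp⟩ ↦ ⟨p, hp.trans h⟩

theorem closedBall_subset_closedBall_of_adj (h : G.Adj v w) (hsr : s < r) :
    closedBall G v s ⊆ closedBall G w r :=
  fun _ ⟨p, hp⟩ ↦ ⟨p.cons h.symm, by rw [Walk.length_cons]; omega⟩

theorem dist_le_of_mem_closedBall (h : u ∈ closedBall G v r) : G.dist v u ≤ r :=
  let ⟨p, hp⟩ := h
  (dist_le p).trans hp

theorem mem_closedBall_dist (h : G.Reachable v u) : u ∈ closedBall G v (G.dist v u) :=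
  let ⟨p, hp⟩ := h.exists_walk_length_eq_dist
  ⟨p, hp.le⟩

theorem closedBall_ssubset_closedBall_succ (h : G.dist v u = r + 1) :
    closedBall G v r ⊂ closedBall G v (r + 1) := by
  have hreach : G.Reachable v u := .of_dist_ne_zero (by omega)
  have hmem : u ∈ closedBall G v (r + 1) := h ▸ mem_closedBall_dist hreach
  have hnotMem : u ∉ closedBall G v r := fun hu ↦ by
    have := dist_le_of_mem_closedBall hu
    omega
  exact (Set.ssubset_iff_of_subset (closedBall_subset_closedBall_of_le r.le_succ)).2
    ⟨u, hmem, hnotMem⟩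

theorem mem_closedBall_of_forall_mem_support (hvw : v ≠ w) (hu : u ∈ closedBall G v (r + 1))
    (hcut : ∀ p : G.Walk v u, w ∈ p.support) : u ∈ closedBall G w r := by
  classical
  obtain ⟨p, hp⟩ := hu
  have hlt : (p.dropUntil w (hcut p)).length < p.length :=
    Walk.length_dropUntil_lt_length (hcut p) hvw.symm
  exact ⟨p.dropUntil w (hcut p), by omega⟩

theorem closedBall_succ_subset_closedBall {S : Set V} (hvw : v ≠ w) (hS : S ⊆ closedBall G w r)
    (hcut : ∀ x ∉ S, ∀ p : G.Walk v x, w ∈ p.support) :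
    closedBall G v (r + 1) ⊆ closedBall G w r := by
  intro x hx
  by_cases hxS : x ∈ S
  · exact hS hxS
  · exact mem_closedBall_of_forall_mem_support hvw hx (hcut x hxS)

end closedBall

theorem ncard_sdiff_singleton_lt_of_ssubset {α : Type*} {s t : Set α} {a : α} (ha : a ∈ s)
    (hst : s ⊂ t) (ht : t.Finite) (b : α) : (s \ {a}).ncard < (t \ {b}).ncard :=
  calc
    (s \ {a}).ncard < s.ncard := Set.ncard_sdiff_singleton_lt_of_mem ha (ht.subset hst.subset)
    _ ≤ t.ncard - 1 := Nat.le_sub_one_of_lt (Set.ncard_lt_ncard hst ht)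
    _ ≤ (t \ {b}).ncard := Set.pred_ncard_le_ncard_sdiff_singleton t b

theorem stmt6_general {V : Type*} {G : SimpleGraph V} {r : ℕ} {v w : V} {S : Set V}
    (hvw : v ≠ w) (hS : S ⊆ closedBall G w r)
    (hcut : ∀ x ∉ S, ∀ p : G.Walk v x, w ∈ p.support) :
    closedBall G v r ⊆ closedBall G w r ∧
    ((closedBall G w r).Finite → (∃ t : V, G.dist t v = r + 1) →
      (closedBall G v r \ {v}).ncard < (closedBall G w r \ {w}).ncard) := by
  have hsucc : closedBall G v (r + 1) ⊆ closedBall G w r :=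
    closedBall_succ_subset_closedBall hvw hS hcut
  refine ⟨(closedBall_subset_closedBall_of_le r.le_succ).trans hsucc, ?_⟩
  rintro hfin ⟨t, ht⟩
  have hssubset : closedBall G v r ⊂ closedBall G w r :=
    (closedBall_ssubset_closedBall_succ (dist_comm.trans ht)).trans_subset hsucc
  exact ncard_sdiff_singleton_lt_of_ssubset mem_closedBall_self hssubset hfin w

/-- Let `v` and `w` be adjacent, `v ∈ S`, `w ∉ S`, every vertex of `S` within
distance `r-1` of `v`, and every walk from `v` to a vertex outside `S` passes
through `w`.  Then `N^r[v] ⊆ N^r[w]`, and if moreover some vertex has distance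
exactly `r+1` from `v`, then `|N^r(v)| < |N^r(w)|`. -/
theorem stmt6 {V : Type*} [Fintype V] [DecidableEq V] (G : SimpleGraph V)
    (r : ℕ) (hr : 1 ≤ r) (v w : V) (hadj : G.Adj v w)
    (S : Set V) (hvS : v ∈ S) (hwS : w ∉ S)
    (hSball : ∀ x ∈ S, ∃ p : G.Walk x v, p.length ≤ r - 1)
    (hcut : ∀ x : V, x ∉ S → ∀ p : G.Walk v x, w ∈ p.support) :
    closedBall G v r ⊆ closedBall G w r ∧
    ((∃ t : V, G.dist t v = r + 1) →
      (closedBall G v r \ {v}).ncard < (closedBall G w r \ {w}).ncard) := by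
  have hS : S ⊆ closedBall G w r := fun x hx ↦
    closedBall_subset_closedBall_of_adj hadj (by omega) (mem_closedBall_symm (hSball x hx))
  exact (stmt6_general hadj.ne hS hcut).imp_right fun h ↦ h (Set.toFinite _)
end
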